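/- For all complex numbers q and x with |q| < 1 and |x| < 1: Σ_{n=0}^∞ Σ_{c=0}^n (x;q)_{n+1} x^n q^{c²+c} x^{2c} [n choose c]_q = (qx;q)_∞ · Σ_{c=0}^∞ q^{c²+c} x^{3c} / (qx;q)_c + (1−x) · Σ_{n=0}^∞ Σ_{c=0}^n ((qx;q)_n − (qx;q)_∞) · x^n · q^{c²+c} · x^{2c} · [n choose c]_q, all series converging absolutely. -/

import Mathlib

/-- The finite q-Pochhammer symbol `(x;q)_n = ∏_{i=1}^n (1 - x q^{i-1})`. -/
noncomputable def qPoch (q x : ℂ) (n : ℕ) : ℂ := ∏ i ∈ Finset.range n, (1 - x * q ^ i)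

/-- The infinite q-Pochhammer symbol `(x;q)_∞ = ∏_{i=1}^∞ (1 - x q^{i-1})`. -/
noncomputable def qPochInf (q x : ℂ) : ℂ := ∏' i : ℕ, (1 - x * q ^ i)

/-- The Gaussian binomial coefficient `[n choose c]_q`. -/
noncomputable def qBinom (q : ℂ) (n c : ℕ) : ℂ :=
  if c ≤ n then qPoch q q n / (qPoch q q c * qPoch q q (n - c)) else 0

theorem qPoch_succ (q x : ℂ) (n : ℕ) : qPoch q x (n + 1) = qPoch q x n * (1 - x * q ^ n) := by
  simp [qPoch, Finset.prod_range_succ]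

theorem qPoch_succ' (q x : ℂ) (n : ℕ) : qPoch q x (n + 1) = (1 - x) * qPoch q (q * x) n := by
  unfold qPoch
  rw [Finset.prod_range_succ', mul_comm]
  congr 1
  · simp
  · refine Finset.prod_congr rfl fun i _ => ?_
    ring

theorem factor_ne (q x : ℂ) (hq : ‖q‖ < 1) (hx : ‖x‖ < 1) (i : ℕ) : 1 - x * q ^ i ≠ 0 := by
  intro h
  have h1 : x * q ^ i = 1 := (sub_eq_zero.mp h).symm
  have h2 : ‖x‖ * ‖q‖ ^ i = 1 := by
    rw [← norm_pow, ← norm_mul, h1, norm_one]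
  have h3 : ‖q‖ ^ i ≤ 1 := pow_le_one₀ (norm_nonneg _) hq.le
  nlinarith [norm_nonneg x]

theorem qPoch_ne (q x : ℂ) (hq : ‖q‖ < 1) (hx : ‖x‖ < 1) (n : ℕ) : qPoch q x n ≠ 0 :=
  Finset.prod_ne_zero_iff.mpr fun i _ => factor_ne q x hq hx i

theorem summ_aux (q x : ℂ) (hq : ‖q‖ < 1) : Summable (fun i : ℕ => ‖-(x * q ^ i)‖) := by
  simp only [norm_neg, norm_mul, norm_pow]
  exact (summable_geometric_of_lt_one (norm_nonneg _) hq).mul_left _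

theorem qPoch_tendsto (q x : ℂ) (hq : ‖q‖ < 1) :
    Filter.Tendsto (qPoch q x) Filter.atTop (nhds (qPochInf q x)) := by
  have h := (multipliable_one_add_of_summable (summ_aux q x hq)).tendsto_prod_tprod_nat
  simp only [← sub_eq_add_neg] at h
  exact h

theorem qPochInf_ne (q x : ℂ) (hq : ‖q‖ < 1) (hx : ‖x‖ < 1) : qPochInf q x ≠ 0 := by
  have h := tprod_one_add_ne_zero_of_summable (f := fun i : ℕ => -(x * q ^ i))
    (fun i => by simpa only [← sub_eq_add_neg] using factor_ne q x hq hx i) (summ_aux q x hq)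
  simp only [← sub_eq_add_neg] at h
  exact h

theorem bdd_of_tendsto (u : ℕ → ℂ) (l : ℂ) (h : Filter.Tendsto u Filter.atTop (nhds l)) :
    ∃ C : ℝ, 0 ≤ C ∧ ∀ n, ‖u n‖ ≤ C := by
  obtain ⟨C, hC⟩ := (Metric.isBounded_range_of_tendsto u h).exists_norm_le
  have h' : ∀ n, ‖u n‖ ≤ C := fun n => hC _ ⟨n, rfl⟩
  exact ⟨C, (norm_nonneg _).trans (h' 0), h'⟩

theorem qBinom_bdd (q : ℂ) (hq : ‖q‖ < 1) : ∃ C : ℝ, 0 ≤ C ∧ ∀ n c, ‖qBinom q n c‖ ≤ C := by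
  obtain ⟨A, hA, hA'⟩ := bdd_of_tendsto _ _ (qPoch_tendsto q q hq)
  obtain ⟨B, hB, hB'⟩ := bdd_of_tendsto _ _ ((qPoch_tendsto q q hq).inv₀ (qPochInf_ne q q hq hq))
  refine ⟨A * (B * B), by positivity, fun n c => ?_⟩
  unfold qBinom
  split_ifs
  · rw [div_eq_mul_inv, mul_inv, norm_mul, norm_mul]
    have h1 := hB' c
    have h2 := hB' (n - c)
    have h3 := hA' n
    gcongr
  · simp
    positivity

theorem qBinom_zero (q : ℂ) (hq : ‖q‖ < 1) (n : ℕ) : qBinom q n 0 = 1 := by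
  have := qPoch_ne q q hq hq n
  have h0 : qPoch q q 0 = 1 := by simp [qPoch]
  simp [qBinom, h0, this]

theorem qBinom_self (q : ℂ) (hq : ‖q‖ < 1) (n : ℕ) : qBinom q n n = 1 := by
  have := qPoch_ne q q hq hq n
  have h0 : qPoch q q 0 = 1 := by simp [qPoch]
  simp [qBinom, h0, this]

theorem qBinom_of_lt (q : ℂ) (n c : ℕ) (h : n < c) : qBinom q n c = 0 := by
  simp [qBinom, h]

theorem qBinom_pascal (q : ℂ) (hq : ‖q‖ < 1) (n c : ℕ) :
    qBinom q (n + 1) (c + 1) = q ^ (c + 1) * qBinom q n (c + 1) + qBinom q n c := by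
  rcases lt_trichotomy n c with h | h | h
  · rw [qBinom_of_lt _ _ _ h, qBinom_of_lt _ _ _ (by omega), qBinom_of_lt _ _ _ (by omega)]
    simp
  · subst h
    rw [qBinom_self q hq, qBinom_self q hq, qBinom_of_lt _ _ _ (by omega)]
    simp
  · obtain ⟨k, rfl⟩ : ∃ k, n = c + 1 + k := ⟨n - (c + 1), by omega⟩
    unfold qBinom
    rw [if_pos (by omega), if_pos (by omega), if_pos (by omega),
      show c + 1 + k + 1 - (c + 1) = k + 1 by omega, show c + 1 + k - (c + 1) = k by omega,
      show c + 1 + k - c = k + 1 by omega, qPoch_succ q q (c + 1 + k), qPoch_succ q q c,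
      qPoch_succ q q k]
    have h1 := qPoch_ne q q hq hq c
    have h2 := qPoch_ne q q hq hq k
    have h3 := factor_ne q q hq hq c
    have h4 := factor_ne q q hq hq k
    field_simp
    ring

theorem summable_col (q x : ℂ) (hq : ‖q‖ < 1) (hx : ‖x‖ < 1) (c : ℕ) :
    Summable (fun n : ℕ => x ^ n * qBinom q n c) := by
  obtain ⟨C, hC, hb⟩ := qBinom_bdd q hq
  refine Summable.of_norm_bounded
    ((summable_geometric_of_lt_one (norm_nonneg _) hx).mul_right C) fun n => ?_
  rw [norm_mul, norm_pow]
  have := hb n c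
  gcongr

theorem tsum_col (q x : ℂ) (hq : ‖q‖ < 1) (hx : ‖x‖ < 1) (c : ℕ) :
    ∑' n : ℕ, x ^ n * qBinom q n c = x ^ c / qPoch q x (c + 1) := by
  induction c with
  | zero =>
    simp only [qBinom_zero q hq, mul_one]
    rw [tsum_geometric_of_norm_lt_one hx]
    simp [qPoch]
  | succ c ih =>
    have hs := summable_col q x hq hx (c + 1)
    have h1 := hs.tsum_eq_zero_add
    have h2 : ∀ n : ℕ, x ^ (n + 1) * qBinom q (n + 1) (c + 1)
        = (x * q ^ (c + 1)) * (x ^ n * qBinom q n (c + 1)) + x * (x ^ n * qBinom q n c) := by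
      intro n
      rw [qBinom_pascal q hq]
      ring
    simp only [h2] at h1
    rw [(hs.mul_left _).tsum_add ((summable_col q x hq hx c).mul_left _), tsum_mul_left,
      tsum_mul_left, ih, qBinom_of_lt _ _ _ (Nat.succ_pos c)] at h1
    rw [qPoch_succ q x (c + 1)]
    have h3 := qPoch_ne q x hq hx (c + 1)
    have h4 := factor_ne q x hq hx (c + 1)
    generalize (∑' n : ℕ, x ^ n * qBinom q n (c + 1)) = S at h1 ⊢
    rw [eq_div_iff (mul_ne_zero h3 h4)]
    field_simp at h1
    linear_combination h1

theorem summable_dbl (q x : ℂ) (hq : ‖q‖ < 1) (hx : ‖x‖ < 1) :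
    Summable (fun p : ℕ × ℕ =>
      x ^ p.1 * q ^ (p.2 ^ 2 + p.2) * x ^ (2 * p.2) * qBinom q p.1 p.2) := by
  obtain ⟨C, hC, hb⟩ := qBinom_bdd q hq
  have hg := (summable_geometric_of_lt_one (norm_nonneg _) hx).mul_of_nonneg
    (summable_geometric_of_lt_one (norm_nonneg _) hq)
    (fun n => by positivity) (fun n => by positivity)
  refine Summable.of_norm_bounded (hg.mul_right C) fun p => ?_
  obtain ⟨n, c⟩ := p
  simp only [norm_mul, norm_pow]
  have h1 := hb n c
  have h2 : ‖q‖ ^ (c ^ 2 + c) ≤ ‖q‖ ^ c :=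
    pow_le_pow_of_le_one (norm_nonneg _) hq.le (by omega)
  have h3 : ‖x‖ ^ (2 * c) ≤ 1 := pow_le_one₀ (norm_nonneg _) hx.le
  calc ‖x‖ ^ n * ‖q‖ ^ (c ^ 2 + c) * ‖x‖ ^ (2 * c) * ‖qBinom q n c‖
      ≤ ‖x‖ ^ n * ‖q‖ ^ c * 1 * C := by gcongr
    _ = _ := by ring

theorem stmt_2 (q x : ℂ) (hq : ‖q‖ < 1) (hx : ‖x‖ < 1) :
    Summable (fun n : ℕ => ∑ c ∈ Finset.range (n + 1),
      qPoch q x (n + 1) * x ^ n * q ^ (c ^ 2 + c) * x ^ (2 * c) * qBinom q n c) ∧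
    Summable (fun c : ℕ => q ^ (c ^ 2 + c) * x ^ (3 * c) / qPoch q (q * x) c) ∧
    Summable (fun n : ℕ => ∑ c ∈ Finset.range (n + 1),
      (qPoch q (q * x) n - qPochInf q (q * x)) * x ^ n * q ^ (c ^ 2 + c) * x ^ (2 * c) *
        qBinom q n c) ∧
    ∑' n : ℕ, ∑ c ∈ Finset.range (n + 1),
        qPoch q x (n + 1) * x ^ n * q ^ (c ^ 2 + c) * x ^ (2 * c) * qBinom q n c
      = qPochInf q (q * x) * ∑' c : ℕ, q ^ (c ^ 2 + c) * x ^ (3 * c) / qPoch q (q * x) c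
        + (1 - x) * ∑' n : ℕ, ∑ c ∈ Finset.range (n + 1),
            (qPoch q (q * x) n - qPochInf q (q * x)) * x ^ n * q ^ (c ^ 2 + c) * x ^ (2 * c) *
              qBinom q n c := by
  set a : ℕ → ℂ := fun n => ∑ c ∈ Finset.range (n + 1),
    x ^ n * q ^ (c ^ 2 + c) * x ^ (2 * c) * qBinom q n c with ha
  have hd := summable_dbl q x hq hx
  have hrow : ∀ n : ℕ, ∑' c : ℕ, x ^ n * q ^ (c ^ 2 + c) * x ^ (2 * c) * qBinom q n c = a n := by
    intro n
    refine tsum_eq_sum fun c hc => ?_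
    rw [qBinom_of_lt _ _ _ (by simpa using hc)]
    simp
  have hx1 : (1 - x) ≠ 0 := by simpa using factor_ne q x hq hx 0
  have hqx : ‖q * x‖ < 1 := by
    rw [norm_mul]
    nlinarith [norm_nonneg q, norm_nonneg x]
  have hcol : ∀ c : ℕ, ∑' n : ℕ, x ^ n * q ^ (c ^ 2 + c) * x ^ (2 * c) * qBinom q n c
      = (1 - x)⁻¹ * (q ^ (c ^ 2 + c) * x ^ (3 * c) / qPoch q (q * x) c) := by
    intro c
    have : ∀ n : ℕ, x ^ n * q ^ (c ^ 2 + c) * x ^ (2 * c) * qBinom q n c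
        = (q ^ (c ^ 2 + c) * x ^ (2 * c)) * (x ^ n * qBinom q n c) := fun n => by ring
    simp only [this]
    rw [tsum_mul_left, tsum_col q x hq hx, qPoch_succ']
    have := qPoch_ne q (q * x) hq hqx c
    field_simp
    ring
  have hnorm : Summable fun n => ‖a n‖ := by
    have h := hd.prod
    simp only [hrow] at h
    exact h.norm
  have hbd : ∀ (u : ℕ → ℂ) (l : ℂ), Filter.Tendsto u Filter.atTop (nhds l) →
      Summable fun n => u n * a n := by
    intro u l hu
    obtain ⟨C, hC, hC'⟩ := bdd_of_tendsto u l hu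
    refine Summable.of_norm_bounded (hnorm.mul_left C) fun n => ?_
    rw [norm_mul]
    have := hC' n
    gcongr
  have hT := qPoch_tendsto q (q * x) hq
  have e1 : ∀ n : ℕ, ∑ c ∈ Finset.range (n + 1),
      qPoch q x (n + 1) * x ^ n * q ^ (c ^ 2 + c) * x ^ (2 * c) * qBinom q n c
      = (1 - x) * (qPoch q (q * x) n * a n) := by
    intro n
    rw [ha, qPoch_succ', Finset.mul_sum, Finset.mul_sum]
    refine Finset.sum_congr rfl fun c _ => ?_
    ring
  have e2 : ∀ n : ℕ, ∑ c ∈ Finset.range (n + 1),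
      (qPoch q (q * x) n - qPochInf q (q * x)) * x ^ n * q ^ (c ^ 2 + c) * x ^ (2 * c) *
        qBinom q n c = (qPoch q (q * x) n - qPochInf q (q * x)) * a n := by
    intro n
    rw [ha, Finset.mul_sum]
    refine Finset.sum_congr rfl fun c _ => ?_
    ring
  have hsw : ∑' n, a n
      = (1 - x)⁻¹ * ∑' c : ℕ, q ^ (c ^ 2 + c) * x ^ (3 * c) / qPoch q (q * x) c := by
    have h := Summable.tsum_comm (f := fun n c : ℕ =>
      x ^ n * q ^ (c ^ 2 + c) * x ^ (2 * c) * qBinom q n c) hd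
    simp only [hrow, hcol, tsum_mul_left] at h
    exact h.symm
  have hs1 := hbd _ _ hT
  have hs2 := hbd (fun n => qPoch q (q * x) n - qPochInf q (q * x)) _ (hT.sub_const _)
  have ha' : Summable a := hnorm.of_norm
  simp only [e1, e2]
  refine ⟨hs1.mul_left _, ?_, hs2, ?_⟩
  · have h := hd.prod_symm.prod
    simp only [Prod.swap, hcol] at h
    exact (summable_mul_left_iff (inv_ne_zero hx1)).mp h
  · have h3 : ∑' n, (qPoch q (q * x) n - qPochInf q (q * x)) * a n
        = ∑' n, qPoch q (q * x) n * a n - qPochInf q (q * x) * ∑' n, a n := by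
      rw [← tsum_mul_left, ← hs1.tsum_sub (ha'.mul_left _)]
      simp only [sub_mul]
    rw [h3, hsw, tsum_mul_left]
    field_simp
    ring
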